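/- For every function f : ℝⁿ → [-∞,+∞], the lower semicontinuous level convex envelope of f equals the lower semicontinuous envelope of the level convex envelope of f, i.e. f^lslc = lsc(f^lc). -/

import Mathlib

open Set

/-- A function on `ℝⁿ` with values in a linear order is *level convex* if
`f (t ξ + (1-t) η) ≤ max (f ξ) (f η)` for all `ξ, η` and `t ∈ [0,1]`. -/
def LevelConvex {n : ℕ} {β : Type*} [LinearOrder β]
    (f : EuclideanSpace ℝ (Fin n) → β) : Prop :=
  ∀ ξ η : EuclideanSpace ℝ (Fin n), ∀ t ∈ Set.Icc (0 : ℝ) 1,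
    f (t • ξ + (1 - t) • η) ≤ max (f ξ) (f η)

/-- The lower semicontinuous envelope of `f : ℝⁿ → [-∞,+∞]`. -/
noncomputable def lscEnv {n : ℕ} (f : EuclideanSpace ℝ (Fin n) → EReal) :
    EuclideanSpace ℝ (Fin n) → EReal :=
  fun ξ => ⨆ (g : EuclideanSpace ℝ (Fin n) → EReal)
    (_ : LowerSemicontinuous g ∧ g ≤ f), g ξ

/-- The level convex envelope of `f : ℝⁿ → [-∞,+∞]`. -/
noncomputable def lcEnv {n : ℕ} (f : EuclideanSpace ℝ (Fin n) → EReal) :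
    EuclideanSpace ℝ (Fin n) → EReal :=
  fun ξ => ⨆ (g : EuclideanSpace ℝ (Fin n) → EReal)
    (_ : LevelConvex g ∧ g ≤ f), g ξ

/-- The lower semicontinuous level convex envelope of `f : ℝⁿ → [-∞,+∞]`. -/
noncomputable def lslcEnv {n : ℕ} (f : EuclideanSpace ℝ (Fin n) → EReal) :
    EuclideanSpace ℝ (Fin n) → EReal :=
  fun ξ => ⨆ (g : EuclideanSpace ℝ (Fin n) → EReal)
    (_ : LowerSemicontinuous g ∧ LevelConvex g ∧ g ≤ f), g ξ


lemma lscEnv_le_aux {n : ℕ} (h : EuclideanSpace ℝ (Fin n) → EReal) : lscEnv h ≤ h :=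
  fun x => iSup₂_le fun _ hg => hg.2 x

lemma lcEnv_le_aux {n : ℕ} (h : EuclideanSpace ℝ (Fin n) → EReal) : lcEnv h ≤ h :=
  fun x => iSup₂_le fun _ hg => hg.2 x

lemma lscEnv_lsc_aux {n : ℕ} (h : EuclideanSpace ℝ (Fin n) → EReal) :
    LowerSemicontinuous (lscEnv h) :=
  lowerSemicontinuous_iSup fun _ => lowerSemicontinuous_iSup fun hg => hg.1

lemma lcEnv_lc_aux {n : ℕ} (h : EuclideanSpace ℝ (Fin n) → EReal) :
    LevelConvex (lcEnv h) := by
  intro x y t ht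
  refine iSup₂_le fun g hg => (hg.1 x y t ht).trans (max_le_max ?_ ?_)
  · exact le_iSup₂_of_le (f := fun (g : EuclideanSpace ℝ (Fin n) → EReal)
      (_ : LevelConvex g ∧ g ≤ h) => g x) g hg le_rfl
  · exact le_iSup₂_of_le (f := fun (g : EuclideanSpace ℝ (Fin n) → EReal)
      (_ : LevelConvex g ∧ g ≤ h) => g y) g hg le_rfl

lemma mem_closure_aux {n : ℕ} (h : EuclideanSpace ℝ (Fin n) → EReal)
    (x : EuclideanSpace ℝ (Fin n)) (d : EReal) (hx : lscEnv h x < d) :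
    x ∈ closure {z | h z ≤ d} := by
  by_contra hc
  refine absurd hx (not_lt.2 ?_)
  classical
  let g : EuclideanSpace ℝ (Fin n) → EReal :=
    fun z => if z ∈ closure {z | h z ≤ d} then ⊥ else d
  have hg : LowerSemicontinuous g ∧ g ≤ h := by
    constructor
    · intro z c hcz
      by_cases hz : z ∈ closure {z | h z ≤ d}
      · simp [g, hz] at hcz
      · have := isClosed_closure.isOpen_compl.mem_nhds hz
        filter_upwards [this] with w hw
        have hw' : w ∉ closure {z | h z ≤ d} := hw
        simp only [g, if_neg hz] at hcz
        simpa only [g, if_neg hw'] using hcz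
    · intro z
      by_cases hz : z ∈ closure {z | h z ≤ d}
      · simp [g, hz]
      · simp only [g, if_neg hz]
        exact (not_le.1 fun hh => hz (subset_closure hh)).le
  refine le_iSup₂_of_le (f := fun (g : EuclideanSpace ℝ (Fin n) → EReal)
      (_ : LowerSemicontinuous g ∧ g ≤ h) => g x) g hg ?_
  simp only [g, if_neg hc]; exact le_rfl

lemma lscEnv_lc_aux {n : ℕ} (h : EuclideanSpace ℝ (Fin n) → EReal) (hh : LevelConvex h) :
    LevelConvex (lscEnv h) := by
  intro x y t ht
  refine iSup₂_le fun g hg => ?_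
  by_contra hc
  obtain ⟨d, hd1, hd2⟩ := exists_between (not_le.1 hc)
  have hS : Convex ℝ {z | h z ≤ d} := by
    intro a ha b hb s r hs hr hsr
    obtain rfl : r = 1 - s := by linarith
    exact (hh a b s ⟨hs, by linarith⟩).trans (max_le ha hb)
  have hx := mem_closure_aux h x d ((le_max_left _ _).trans_lt hd1)
  have hy := mem_closure_aux h y d ((le_max_right _ _).trans_lt hd1)
  have hm := hS.closure hx hy ht.1 (sub_nonneg.2 ht.2) (by ring)
  obtain ⟨w, hw1, hw2⟩ := mem_closure_iff_nhds.1 hm _ (hg.1 _ d hd2)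
  exact absurd ((hg.2 w).trans hw2) (not_le.2 hw1)

/-- For every `f : ℝⁿ → [-∞,+∞]` one has `f^lslc = lsc (f^lc)`. -/
theorem lslcEnv_eq_lscEnv_lcEnv {n : ℕ} (f : EuclideanSpace ℝ (Fin n) → EReal) :
    lslcEnv f = lscEnv (lcEnv f) := by
  funext x
  apply le_antisymm
  · refine iSup₂_le fun g hg => ?_
    refine le_iSup₂_of_le (f := fun (g : EuclideanSpace ℝ (Fin n) → EReal)
      (_ : LowerSemicontinuous g ∧ g ≤ lcEnv f) => g x) g ⟨hg.1, fun y => ?_⟩ le_rfl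
    exact le_iSup₂_of_le (f := fun (g : EuclideanSpace ℝ (Fin n) → EReal)
      (_ : LevelConvex g ∧ g ≤ f) => g y) g hg.2 le_rfl
  · exact le_iSup₂_of_le (f := fun (g : EuclideanSpace ℝ (Fin n) → EReal)
      (_ : LowerSemicontinuous g ∧ LevelConvex g ∧ g ≤ f) => g x) (lscEnv (lcEnv f))
      ⟨lscEnv_lsc_aux _, lscEnv_lc_aux _ (lcEnv_lc_aux f),
        (lscEnv_le_aux _).trans (lcEnv_le_aux f)⟩ le_rfl
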